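/- A generalised clause-set F is an unsatisfiable hitting clause-set if and only if for every partial assignment φ the clause-set φ*F is minimally unsatisfiable. -/

import Mathlib

open scoped Classical

namespace GCLS

variable {V α : Type} [DecidableEq V] [DecidableEq α]

/-- A finite "functional" set of (variable, value) pairs, with values inside the
given domains `D`; used both for clauses and for partial assignments. -/
def FinFn (D : V → Finset α) : Type :=
  { s : Finset (V × α) // (∀ p ∈ s, p.2 ∈ D p.1) ∧
      ∀ p ∈ s, ∀ q ∈ s, p.1 = q.1 → p = q }

variable {D : V → Finset α}

instance : DecidableEq (FinFn D) :=
  fun a b => decidable_of_iff (a.1 = b.1) Subtype.ext_iff.symm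

namespace FinFn

/-- The set of variables occurring. -/
def vars (s : FinFn D) : Finset V := s.1.image Prod.fst

/-- Restriction to the pairs whose variable lies in `W`. -/
def restrictVars (s : FinFn D) (W : Finset V) : FinFn D :=
  ⟨s.1.filter (fun p => p.1 ∈ W),
   fun p hp => s.2.1 p (Finset.mem_filter.mp hp).1,
   fun p hp q hq h =>
     s.2.2 p (Finset.mem_filter.mp hp).1 q (Finset.mem_filter.mp hq).1 h⟩

/-- Removal of a set of pairs. -/
def sdiff (s : FinFn D) (t : Finset (V × α)) : FinFn D :=
  ⟨s.1 \ t,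
   fun p hp => s.2.1 p (Finset.mem_sdiff.mp hp).1,
   fun p hp q hq h =>
     s.2.2 p (Finset.mem_sdiff.mp hp).1 q (Finset.mem_sdiff.mp hq).1 h⟩

end FinFn

/-- Clauses: finite sets of literals `(v,ε)` (meaning "v ≠ ε"), at most one literal
per variable, values inside the domains. -/
abbrev Clause (D : V → Finset α) := FinFn D

/-- Partial assignments: finitely many variables get values inside their domains. -/
abbrev PAssign (D : V → Finset α) := FinFn D

/-- `φ` satisfies the literal `(v,ε)` (i.e. "v ≠ ε"): `v` is assigned a value ≠ `ε`. -/
def SatLit (φ : PAssign D) (l : V × α) : Prop :=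
  ∃ ε, (l.1, ε) ∈ φ.1 ∧ ε ≠ l.2

/-- `φ` satisfies a clause iff it satisfies some literal of it. -/
def SatClause (φ : PAssign D) (C : Clause D) : Prop :=
  ∃ l ∈ C.1, SatLit φ l

/-- The clause obtained from `C` by deleting all literals falsified by `φ`. -/
def Clause.restrict (φ : PAssign D) (C : Clause D) : Clause D :=
  FinFn.sdiff C φ.1

/-- The operation `φ * F` on multi-clause-sets: remove all clauses satisfied by `φ`
and delete all falsified literals from the remaining clauses. -/
noncomputable def applyM (φ : PAssign D) (F : Multiset (Clause D)) : Multiset (Clause D) :=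
  (F.filter (fun C => ¬ SatClause φ C)).map (Clause.restrict φ)

/-- The operation `φ * F` on clause-sets (with contraction of equal clauses). -/
noncomputable def applyF (φ : PAssign D) (F : Finset (Clause D)) : Finset (Clause D) :=
  (F.filter (fun C => ¬ SatClause φ C)).image (Clause.restrict φ)

/-- Satisfiability: some partial assignment satisfies all clauses. -/
def Sat (F : Multiset (Clause D)) : Prop :=
  ∃ φ : PAssign D, applyM φ F = 0

/-- Minimal unsatisfiability of a clause-set. -/
def MinUnsat (F : Finset (Clause D)) : Prop :=
  ¬ Sat F.val ∧ ∀ F' ⊂ F, Sat F'.val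

/-- The variables of a multi-clause-set. -/
def mvars (F : Multiset (Clause D)) : Finset V := F.toFinset.sup FinFn.vars

/-- The deficiency `δ(F) = c(F) - Σ_{v ∈ var(F)} (|D_v| - 1)`. -/
def delta (F : Multiset (Clause D)) : ℤ :=
  (Multiset.card F : ℤ) - ∑ v ∈ mvars F, ((D v).card - 1 : ℤ)

lemma powerset_toFinset_nonempty (F : Multiset (Clause D)) :
    F.powerset.toFinset.Nonempty :=
  ⟨0, by simp⟩

/-- The maximal deficiency `δ*(F) = max {δ(F') : F' ≤ F}`. -/
noncomputable def deltaStar (F : Multiset (Clause D)) : ℤ :=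
  F.powerset.toFinset.sup' (powerset_toFinset_nonempty F) delta

/-- A tight sub-multi-clause-set: `F' ≤ F` with `δ(F') = δ*(F)`. -/
noncomputable def Tight (F F' : Multiset (Clause D)) : Prop :=
  F' ≤ F ∧ delta F' = deltaStar F

/-- `F` is matching satisfiable: the clause-variable graph `B(F)` has a matching
covering all clause-nodes.  Such a matching is encoded as a multiset `P` of pairs
(clause-occurrence, variable-node), where the variable-nodes `(v,k)`,
`k < |D v| - 1`, are the copies of the variable `v`; the matching covers each
clause-occurrence exactly once (`P.map Prod.fst = F`), uses pairwise distinct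
variable-nodes, and respects adjacency in `B(F)`. -/
def MatchingSat (F : Multiset (Clause D)) : Prop :=
  ∃ P : Multiset (Clause D × (V × ℕ)),
    P.map Prod.fst = F ∧ (P.map Prod.snd).Nodup ∧
    ∀ p ∈ P, p.2.1 ∈ FinFn.vars p.1 ∧ p.2.2 < (D p.2.1).card - 1

/-- The edge between clause `C` and the copies of variable `v` is retained in
`B_φ(F)`: the literal of `C` with variable `v` is satisfied by `φ`. -/
def EdgeSat (φ : PAssign D) (C : Clause D) (v : V) : Prop :=
  ∃ ε, (v, ε) ∈ C.1 ∧ SatLit φ (v, ε)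

/-- `φ` is matching-satisfying for `F`: `B_φ(F)` has a matching covering all
clause-nodes. -/
def MatchingSatisfying (φ : PAssign D) (F : Multiset (Clause D)) : Prop :=
  ∃ P : Multiset (Clause D × (V × ℕ)),
    P.map Prod.fst = F ∧ (P.map Prod.snd).Nodup ∧
    ∀ p ∈ P, p.2.2 < (D p.2.1).card - 1 ∧ EdgeSat φ p.1 p.2.1

/-- The maximum size of a matching in `B(F)`. -/
noncomputable def nu (F : Multiset (Clause D)) : ℕ :=
  sSup { k | ∃ P : Multiset (Clause D × (V × ℕ)),
    P.map Prod.fst ≤ F ∧ (P.map Prod.snd).Nodup ∧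
    (∀ p ∈ P, p.2.1 ∈ FinFn.vars p.1 ∧ p.2.2 < (D p.2.1).card - 1) ∧
    Multiset.card P = k }

/-- The maximum size of a matching in `B_φ(F)`. -/
noncomputable def nuSub (φ : PAssign D) (F : Multiset (Clause D)) : ℕ :=
  sSup { k | ∃ P : Multiset (Clause D × (V × ℕ)),
    P.map Prod.fst ≤ F ∧ (P.map Prod.snd).Nodup ∧
    (∀ p ∈ P, p.2.2 < (D p.2.1).card - 1 ∧ EdgeSat φ p.1 p.2.1) ∧
    Multiset.card P = k }

/-- `φ` is matching-maximum for `F`. -/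
noncomputable def MatchingMaximum (φ : PAssign D) (F : Multiset (Clause D)) : Prop :=
  nuSub φ F = nu F

/-- `φ` is an autarky for `F`: every clause touched by `φ` is satisfied by `φ`. -/
def IsAutarky (φ : PAssign D) (F : Multiset (Clause D)) : Prop :=
  ∀ C ∈ F, (FinFn.vars C ∩ FinFn.vars φ).Nonempty → SatClause φ C

/-- `F` is lean: it has no non-trivial autarky. -/
def IsLean (F : Multiset (Clause D)) : Prop :=
  ¬ ∃ φ : PAssign D, IsAutarky φ F ∧ (FinFn.vars φ ∩ mvars F).Nonempty

/-- The sub-multi-clause-set of clauses touched by the variables in `W`. -/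
noncomputable def touchedBy (F : Multiset (Clause D)) (W : Finset V) : Multiset (Clause D) :=
  F.filter (fun C => (FinFn.vars C ∩ W).Nonempty)

/-- The restriction `F[W]`: keep the clauses touching `W` and delete from them all
literals whose variable is not in `W`. -/
noncomputable def restrictTo (F : Multiset (Clause D)) (W : Finset V) : Multiset (Clause D) :=
  (touchedBy F W).map (fun C => FinFn.restrictVars C W)

/-- `φ` is a matching autarky for `F`: `φ` is matching-satisfying for the
sub-multi-clause-set of clauses touched by `φ`. -/
noncomputable def IsMatchingAutarky (φ : PAssign D) (F : Multiset (Clause D)) : Prop :=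
  MatchingSatisfying φ (touchedBy F (FinFn.vars φ))

/-- `F` is matching lean: no non-trivial matching autarky. -/
noncomputable def MatchingLean (F : Multiset (Clause D)) : Prop :=
  ¬ ∃ φ : PAssign D, IsMatchingAutarky φ F ∧ (FinFn.vars φ ∩ mvars F).Nonempty

lemma surp_nonempty {F : Multiset (Clause D)} (h : (mvars F).Nonempty) :
    ((mvars F).powerset.erase ∅).Nonempty := by
  obtain ⟨v, hv⟩ := h
  refine ⟨{v}, ?_⟩
  simp [Finset.mem_erase, Finset.singleton_subset_iff, hv]

/-- The surplus `surp(F) = min {δ(F[W]) : ∅ ≠ W ⊆ var(F)}` (and `0` if `var(F) = ∅`). -/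
noncomputable def surp (F : Multiset (Clause D)) : ℤ :=
  if h : (mvars F).Nonempty then
    ((mvars F).powerset.erase ∅).inf' (surp_nonempty h)
      (fun W => delta (restrictTo F W))
  else 0

/-- The number of occurrences of the literal `l` in `F`. -/
noncomputable def litCount (F : Multiset (Clause D)) (l : V × α) : ℕ :=
  Multiset.card (F.filter (fun C => l ∈ C.1))

/-- The number of occurrences `#_v(F)` of the variable `v` in `F`. -/
noncomputable def varCount (F : Multiset (Clause D)) (v : V) : ℕ :=
  ∑ ε ∈ D v, litCount F (v, ε)

/-- The partial assignment `⟨v → ε⟩`. -/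
def single (v : V) (ε : α) (hε : ε ∈ D v) : PAssign D :=
  ⟨{(v, ε)}, by
    refine ⟨?_, ?_⟩
    · intro p hp
      rw [Finset.mem_singleton] at hp
      subst hp; exact hε
    · intro p hp q hq _
      rw [Finset.mem_singleton] at hp hq
      subst hp; subst hq; rfl⟩

/-- Composition `φ ∘ ψ` of partial assignments: domain is the union of the domains,
`ψ` taking precedence. -/
def comp (φ ψ : PAssign D) : PAssign D :=
  ⟨ψ.1 ∪ φ.1.filter (fun p => p.1 ∉ FinFn.vars ψ), by
    constructor
    · intro p hp
      rcases Finset.mem_union.mp hp with h | h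
      · exact ψ.2.1 p h
      · exact φ.2.1 p (Finset.mem_filter.mp h).1
    · intro p hp q hq hpq
      rcases Finset.mem_union.mp hp with h1 | h1 <;>
        rcases Finset.mem_union.mp hq with h2 | h2
      · exact ψ.2.2 p h1 q h2 hpq
      · exact absurd (hpq ▸ Finset.mem_image_of_mem Prod.fst h1)
          (Finset.mem_filter.mp h2).2
      · exact absurd (hpq.symm ▸ Finset.mem_image_of_mem Prod.fst h2)
          (Finset.mem_filter.mp h1).2
      · exact φ.2.2 p (Finset.mem_filter.mp h1).1 q (Finset.mem_filter.mp h2).1 hpq⟩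

/-- Two clauses clash (in some variable). -/
def Clash (C C' : Clause D) : Prop :=
  ∃ v ε ε', (v, ε) ∈ C.1 ∧ (v, ε') ∈ C'.1 ∧ ε ≠ ε'

/-- The number of variables in which two clauses clash. -/
noncomputable def clashCount (C C' : Clause D) : ℕ :=
  ((FinFn.vars C).filter
    (fun v => ∃ ε ε', (v, ε) ∈ C.1 ∧ (v, ε') ∈ C'.1 ∧ ε ≠ ε')).card

/-- Hitting clause-sets: every two distinct clauses clash. -/
def Hitting (F : Finset (Clause D)) : Prop :=
  ∀ C ∈ F, ∀ C' ∈ F, C ≠ C' → Clash C C'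

/-- Boolean clauses over the boolean variables `V × α` (one boolean variable per
generalised literal; the value `false` gives the positive boolean literal). -/
abbrev BClause (V α : Type) :=
  Clause (fun _ : V × α => (Finset.univ : Finset Bool))

/-- The direct translation of a single clause: each literal `(v,ε)` is replaced by
the positive boolean literal of the boolean variable `(v,ε)`. -/
def dirClause (C : Clause D) : BClause V α :=
  ⟨C.1.image (fun p => (p, false)), by
    constructor
    · intro p _; exact Finset.mem_univ _
    · intro p hp q hq h
      simp only [Finset.mem_image] at hp hq
      obtain ⟨a, -, rfl⟩ := hp
      obtain ⟨b, -, rfl⟩ := hq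
      exact congrArg (fun x => (x, false)) h⟩

/-- The ALO-clause for a variable `v`: the negative boolean literals of the boolean
variables `(v,ε)` for `ε ∈ D v`. -/
def aloClause (D : V → Finset α) (v : V) : BClause V α :=
  ⟨(D v).image (fun ε => ((v, ε), true)), by
    constructor
    · intro p _; exact Finset.mem_univ _
    · intro p hp q hq h
      simp only [Finset.mem_image] at hp hq
      obtain ⟨a, -, rfl⟩ := hp
      obtain ⟨b, -, rfl⟩ := hq
      exact congrArg (fun x => (x, true)) h⟩

/-- The direct translation `Γ(F)`: the translated clauses together with the
ALO-clauses for all occurring variables. -/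
noncomputable def dirTrans (F : Finset (Clause D)) : Finset (BClause V α) :=
  F.image dirClause ∪ (mvars F.val).image (aloClause D)

/-!
A clause `C`, read as the partial assignment that falsifies all of its literals, satisfies exactly
the clauses that clash with `C`. Hence in a hitting clause-set any clause satisfies all the others,
so unsatisfiability already implies minimality; and `φ * F` inherits both properties from `F`,
because two clauses not satisfied by `φ` keep the literals in which they clash.

Conversely, if `C` and `C'` in `F` do not clash, then `C' * F` contains the empty clause (from `C'`)
and the clause `C \ C'`. A minimally unsatisfiable clause-set containing the empty clause contains
nothing else, so `C ⊆ C'`, and `C = C'` by symmetry.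
-/

section

omit [DecidableEq V] [DecidableEq α]

theorem Clash.symm {C C' : Clause D} (h : Clash C C') : Clash C' C := by
  obtain ⟨v, ε, ε', hC, hC', hne⟩ := h
  exact ⟨v, ε', ε, hC', hC, hne.symm⟩

theorem not_clash_self (C : Clause D) : ¬ Clash C C := by
  rintro ⟨v, ε, ε', hε, hε', hne⟩
  exact hne (congrArg Prod.snd (C.2.2 _ hε _ hε' rfl))

theorem satClause_iff_clash {φ : PAssign D} {C : Clause D} : SatClause φ C ↔ Clash φ C := by
  constructor
  · rintro ⟨⟨v, ε⟩, hC, ε', hφ, hne⟩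
    exact ⟨v, ε', ε, hφ, hC, hne⟩
  · rintro ⟨v, ε', ε, hφ, hC, hne⟩
    exact ⟨(v, ε), hC, ε', hφ, hne⟩

end

theorem sat_iff_exists_forall_satClause {F : Multiset (Clause D)} :
    Sat F ↔ ∃ φ : PAssign D, ∀ C ∈ F, SatClause φ C := by
  simp only [Sat, applyM, Multiset.map_eq_zero, Multiset.filter_eq_nil, not_not]

theorem mem_restrict {φ : PAssign D} {C : Clause D} {l : V × α} :
    l ∈ (C.restrict φ).1 ↔ l ∈ C.1 ∧ l ∉ φ.1 :=
  Finset.mem_sdiff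

theorem restrict_val_eq_empty_iff {φ : PAssign D} {C : Clause D} :
    (C.restrict φ).1 = ∅ ↔ C.1 ⊆ φ.1 :=
  Finset.sdiff_eq_empty_iff_subset

theorem mem_applyF {φ : PAssign D} {F : Finset (Clause D)} {A : Clause D} :
    A ∈ applyF φ F ↔ ∃ C ∈ F, ¬ SatClause φ C ∧ C.restrict φ = A := by
  simp only [applyF, Finset.mem_image, Finset.mem_filter, and_assoc]

theorem restrict_mem_applyF {φ : PAssign D} {F : Finset (Clause D)} {C : Clause D}
    (hC : C ∈ F) (hφ : ¬ SatClause φ C) : C.restrict φ ∈ applyF φ F :=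
  mem_applyF.mpr ⟨C, hC, hφ, rfl⟩

theorem mem_comp {φ ψ : PAssign D} {l : V × α} :
    l ∈ (comp ψ φ).1 ↔ l ∈ φ.1 ∨ l ∈ ψ.1 ∧ l.1 ∉ φ.vars := by
  simp only [comp, Finset.mem_union, Finset.mem_filter]

theorem fst_notMem_vars_of_mem_restrict {φ : PAssign D} {C : Clause D} (hφ : ¬ SatClause φ C)
    {l : V × α} (hl : l ∈ (C.restrict φ).1) : l.1 ∉ φ.vars := by
  obtain ⟨hlC, hlφ⟩ := mem_restrict.mp hl
  intro hv
  obtain ⟨⟨v, ε⟩, hε, rfl : v = l.1⟩ := Finset.mem_image.mp hv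
  have hne : ε ≠ l.2 := by
    rintro rfl
    exact hlφ hε
  exact hφ ⟨l, hlC, ε, hε, hne⟩

theorem satClause_comp_iff {φ ψ : PAssign D} {C : Clause D} :
    SatClause (comp ψ φ) C ↔ SatClause φ C ∨ SatClause ψ (C.restrict φ) := by
  constructor
  · rintro ⟨l, hl, ε, hε, hne⟩
    rcases mem_comp.mp hε with hεφ | ⟨hεψ, hv : l.1 ∉ φ.vars⟩
    · exact Or.inl ⟨l, hl, ε, hεφ, hne⟩
    · have hlφ : l ∉ φ.1 := fun h => hv (Finset.mem_image_of_mem Prod.fst h)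
      exact Or.inr ⟨l, mem_restrict.mpr ⟨hl, hlφ⟩, ε, hεψ, hne⟩
  · intro h
    by_cases hφ : SatClause φ C
    · obtain ⟨l, hl, ε, hε, hne⟩ := hφ
      exact ⟨l, hl, ε, mem_comp.mpr (Or.inl hε), hne⟩
    · obtain ⟨l, hl, ε, hε, hne⟩ := h.resolve_left hφ
      have hv : l.1 ∉ φ.vars := fst_notMem_vars_of_mem_restrict hφ hl
      exact ⟨l, (mem_restrict.mp hl).1, ε, mem_comp.mpr (Or.inr ⟨hε, hv⟩), hne⟩

theorem forall_mem_applyF_satClause_iff {φ ψ : PAssign D} {F : Finset (Clause D)} :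
    (∀ A ∈ applyF φ F, SatClause ψ A) ↔ ∀ C ∈ F, SatClause (comp ψ φ) C := by
  simp only [satClause_comp_iff, or_iff_not_imp_left]
  constructor
  · exact fun h C hC hφ => h _ (restrict_mem_applyF hC hφ)
  · intro h A hA
    obtain ⟨C, hC, hφ, rfl⟩ := mem_applyF.mp hA
    exact h C hC hφ

theorem sat_iff_exists_sat_applyF {F : Finset (Clause D)} :
    Sat F.val ↔ ∃ φ : PAssign D, Sat (applyF φ F).val := by
  simp only [sat_iff_exists_forall_satClause, Finset.mem_val, forall_mem_applyF_satClause_iff]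
  constructor
  · rintro ⟨φ, hφ⟩
    exact ⟨φ, φ, fun C hC => satClause_comp_iff.mpr (Or.inl (hφ C hC))⟩
  · rintro ⟨φ, ψ, h⟩
    exact ⟨comp ψ φ, h⟩

theorem Clash.restrict {φ : PAssign D} {C C' : Clause D} (h : Clash C C')
    (hC : ¬ SatClause φ C) (hC' : ¬ SatClause φ C') :
    Clash (C.restrict φ) (C'.restrict φ) := by
  obtain ⟨v, ε, ε', hε, hε', hne⟩ := h
  have hεφ : (v, ε) ∉ φ.1 := fun hφ => hC' ⟨(v, ε'), hε', ε, hφ, hne⟩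
  have hε'φ : (v, ε') ∉ φ.1 := fun hφ => hC ⟨(v, ε), hε, ε', hφ, hne.symm⟩
  exact ⟨v, ε, ε', mem_restrict.mpr ⟨hε, hεφ⟩, mem_restrict.mpr ⟨hε', hε'φ⟩, hne⟩

theorem hitting_applyF {F : Finset (Clause D)} (hF : Hitting F) (φ : PAssign D) :
    Hitting (applyF φ F) := by
  intro A hA A' hA' hne
  obtain ⟨C, hC, hφ, rfl⟩ := mem_applyF.mp hA
  obtain ⟨C', hC', hφ', rfl⟩ := mem_applyF.mp hA'
  exact (hF C hC C' hC' (ne_of_apply_ne _ hne)).restrict hφ hφ'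

theorem Hitting.minUnsat {F : Finset (Clause D)} (hF : Hitting F) (hunsat : ¬ Sat F.val) :
    MinUnsat F := by
  refine ⟨hunsat, fun F' hF' => ?_⟩
  obtain ⟨C, hC, hCF'⟩ := Finset.exists_of_ssubset hF'
  refine sat_iff_exists_forall_satClause.mpr ⟨C, fun B hB => ?_⟩
  have hne : C ≠ B := fun h => hCF' (h ▸ hB)
  exact satClause_iff_clash.mpr (hF C hC B (hF'.subset hB) hne)

theorem not_sat_of_mem_of_val_eq_empty {F : Multiset (Clause D)} {E : Clause D} (hE : E ∈ F)
    (hempty : E.1 = ∅) : ¬ Sat F := by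
  intro hsat
  obtain ⟨φ, hφ⟩ := sat_iff_exists_forall_satClause.mp hsat
  obtain ⟨l, hl, -⟩ := hφ E hE
  exact Finset.eq_empty_iff_forall_notMem.mp hempty l hl

theorem MinUnsat.eq_of_mem_of_val_eq_empty {F : Finset (Clause D)} (hF : MinUnsat F)
    {A E : Clause D} (hA : A ∈ F) (hE : E ∈ F) (hempty : E.1 = ∅) : A = E := by
  by_contra hne
  have hE_erase : E ∈ F.erase A := Finset.mem_erase.mpr ⟨Ne.symm hne, hE⟩
  exact not_sat_of_mem_of_val_eq_empty hE_erase hempty (hF.2 _ (Finset.erase_ssubset hA))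

theorem val_subset_of_minUnsat_applyF_of_not_clash {F : Finset (Clause D)} {C C' : Clause D}
    (hmin : MinUnsat (applyF C' F)) (hC : C ∈ F) (hC' : C' ∈ F) (hclash : ¬ Clash C' C) :
    C.1 ⊆ C'.1 := by
  have hmem : C.restrict C' ∈ applyF C' F :=
    restrict_mem_applyF hC (mt satClause_iff_clash.mp hclash)
  have hmem_self : C'.restrict C' ∈ applyF C' F :=
    restrict_mem_applyF hC' (mt satClause_iff_clash.mp (not_clash_self C'))
  have hempty : (C'.restrict C').1 = ∅ := restrict_val_eq_empty_iff.mpr subset_rfl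
  have heq : C.restrict C' = C'.restrict C' :=
    hmin.eq_of_mem_of_val_eq_empty hmem hmem_self hempty
  exact restrict_val_eq_empty_iff.mp (heq ▸ hempty)

theorem hitting_of_forall_minUnsat_applyF {F : Finset (Clause D)}
    (hmin : ∀ φ : PAssign D, MinUnsat (applyF φ F)) : Hitting F := by
  intro C hC C' hC' hne
  by_contra hclash
  have hsub : C.1 ⊆ C'.1 :=
    val_subset_of_minUnsat_applyF_of_not_clash (hmin C') hC hC' (mt Clash.symm hclash)
  have hsub' : C'.1 ⊆ C.1 :=
    val_subset_of_minUnsat_applyF_of_not_clash (hmin C) hC' hC hclash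
  exact hne (Subtype.ext (hsub.antisymm hsub'))

/-- `F` is an unsatisfiable hitting clause-set iff `φ * F` is
minimally unsatisfiable for every partial assignment `φ`. -/
theorem unsat_hitting_iff_all_applications_minUnsat
    (hD : ∀ v, (D v).Nonempty) (F : Finset (Clause D)) :
    (¬ Sat F.val ∧ Hitting F) ↔
      ∀ φ : PAssign D, MinUnsat (applyF φ F) := by
  constructor
  · rintro ⟨hunsat, hhit⟩ φ
    have hunsat_apply : ¬ Sat (applyF φ F).val := fun hsat =>
      hunsat (sat_iff_exists_sat_applyF.mpr ⟨φ, hsat⟩)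
    exact (hitting_applyF hhit φ).minUnsat hunsat_apply
  · intro hmin
    refine ⟨fun hsat => ?_, hitting_of_forall_minUnsat_applyF hmin⟩
    obtain ⟨φ, hφ⟩ := sat_iff_exists_sat_applyF.mp hsat
    exact (hmin φ).1 hφ

end GCLS
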